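/- Let γ > 0 and fix (q₀, p₀) ∈ ℝ². For all t > 0 the covariance matrix Σ(t) is invertible, and the function (t,q,p) ↦ F(t,q,p;q₀,p₀) satisfies the kinetic Fokker–Planck equation ∂F/∂t = −p ∂F/∂q + γ ∂/∂p (p F) + γ ∂²F/∂p² for all t > 0 and q, p ∈ ℝ. -/

import Mathlib

open Matrix in
/-- Covariance matrix `Σ(t)` of the Gaussian fundamental solution of the kinetic
Fokker–Planck equation of 1D Langevin dynamics with constant potential and `β = 1`. -/
noncomputable def covMat (γ t : ℝ) : Matrix (Fin 2) (Fin 2) ℝ :=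
  !![(2 / γ ^ 2) * (γ * t - 3 / 2 + 2 * Real.exp (-γ * t) - Real.exp (-2 * γ * t) / 2),
     (1 - Real.exp (-γ * t)) ^ 2 / γ;
     (1 - Real.exp (-γ * t)) ^ 2 / γ,
     1 - Real.exp (-2 * γ * t)]

/-- Mean vector `M(t,q₀,p₀)` of the Gaussian fundamental solution. -/
noncomputable def meanVec (γ t q₀ p₀ : ℝ) : Fin 2 → ℝ :=
  ![q₀ + p₀ * (1 - Real.exp (-γ * t)) / γ, p₀ * Real.exp (-γ * t)]

open Matrix in
/-- The Gaussian fundamental solution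
`F(t,q,p;q₀,p₀) = (2π √(det Σ(t)))⁻¹ exp(−½ (z−M)ᵀ Σ(t)⁻¹ (z−M))` with `z = (q,p)`. -/
noncomputable def Fsol (γ t q p q₀ p₀ : ℝ) : ℝ :=
  (2 * Real.pi * Real.sqrt (covMat γ t).det)⁻¹ *
    Real.exp (-(1 / 2) *
      ((![q, p] - meanVec γ t q₀ p₀) ⬝ᵥ ((covMat γ t)⁻¹ *ᵥ (![q, p] - meanVec γ t q₀ p₀))))

/-!
Let `m' = A m` and let `Σ` solve the Lyapunov equation `Σ' = A Σ + Σ Aᵀ + 2 D`. Differentiating the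
Gaussian density `F` with mean `m` and covariance `Σ` in time gives
`∂ₜF = (w · A x - tr A + w · D w - tr (Σ⁻¹ D)) F`, where `w = Σ⁻¹ (x - m)`. Since `∇F = -F w`, this
is `-∇ · (F A x) + ∇ · (D ∇F)`. The Langevin mean and covariance satisfy these equations with
`A = (0 1; 0 -γ)` and `D = diag(0, γ)`, and invertibility follows from
`det Σ(t) = 16 e^{-2y} sinh y (y cosh y - sinh y) / γ²` with `y = γ t / 2`.
-/

open Matrix Real

section Calculus

variable {𝕜 : Type*} [NontriviallyNormedField 𝕜] {m n : Type*} {t : 𝕜}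

lemma hasDerivAt_matrix_iff [Finite m] [Finite n] {S : 𝕜 → Matrix m n 𝕜} {S' : Matrix m n 𝕜} :
    HasDerivAt S S' t ↔ ∀ i j, HasDerivAt (fun s => S s i j) (S' i j) t := by
  cases nonempty_fintype m
  cases nonempty_fintype n
  exact hasDerivAt_pi.trans <| forall_congr' fun _ => hasDerivAt_pi

lemma hasDerivAt_const_matrix [Finite m] [Finite n] (t : 𝕜) (M : Matrix m n 𝕜) :
    HasDerivAt (fun _ => M) 0 t :=
  hasDerivAt_matrix_iff.2 fun i j => hasDerivAt_const t (M i j)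

variable [Fintype n]

lemma hasDerivAt_dotProduct {u v : 𝕜 → n → 𝕜} {u' v' : n → 𝕜} (hu : HasDerivAt u u' t)
    (hv : HasDerivAt v v' t) :
    HasDerivAt (fun s => u s ⬝ᵥ v s) (u' ⬝ᵥ v t + u t ⬝ᵥ v') t := by
  simpa only [dotProduct, ← Finset.sum_add_distrib] using HasDerivAt.fun_sum fun i _ =>
    (hasDerivAt_pi.1 hu i).fun_mul (hasDerivAt_pi.1 hv i)

lemma hasDerivAt_mulVec [Finite m] {S : 𝕜 → Matrix m n 𝕜} {S' : Matrix m n 𝕜}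
    {v : 𝕜 → n → 𝕜} {v' : n → 𝕜} (hS : HasDerivAt S S' t) (hv : HasDerivAt v v' t) :
    HasDerivAt (fun s => S s *ᵥ v s) (S' *ᵥ v t + S t *ᵥ v') t := by
  cases nonempty_fintype m
  exact hasDerivAt_pi.2 fun i => hasDerivAt_dotProduct (hasDerivAt_pi.1 hS i) hv

lemma hasDerivAt_dotProduct_mulVec_self {K : 𝕜 → Matrix n n 𝕜} {K' : Matrix n n 𝕜} {z : 𝕜 → n → 𝕜}
    {z' : n → 𝕜} (hK : HasDerivAt K K' t) (hsymm : (K t).IsSymm) (hz : HasDerivAt z z' t) :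
    HasDerivAt (fun s => z s ⬝ᵥ (K s *ᵥ z s))
      (2 * ((K t *ᵥ z t) ⬝ᵥ z') + z t ⬝ᵥ (K' *ᵥ z t)) t := by
  refine (hasDerivAt_dotProduct hz (hasDerivAt_mulVec hK hz)).congr_deriv ?_
  have hswap : z t ⬝ᵥ (K t *ᵥ z') = (K t *ᵥ z t) ⬝ᵥ z' := by
    rw [dotProduct_mulVec, ← mulVec_transpose, hsymm.eq]
  rw [dotProduct_add, hswap, dotProduct_comm z']
  ring

variable [DecidableEq n] {S : 𝕜 → Matrix n n 𝕜} {S' : Matrix n n 𝕜}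

lemma trace_adjugate_mul {R : Type*} [CommRing R] (A B : Matrix n n R) :
    (A.adjugate * B).trace = ∑ i, (A.updateCol i (B.col i)).det := by
  simp only [← cramer_apply, cramer_eq_adjugate_mulVec]
  rfl

lemma hasDerivAt_det (hS : HasDerivAt S S' t) :
    HasDerivAt (fun s => (S s).det) ((S t).adjugate * S').trace t := by
  have hentry := hasDerivAt_matrix_iff.1 hS
  have hleibniz := HasDerivAt.fun_sum (u := Finset.univ) fun (σ : Equiv.Perm n) _ =>
    (HasDerivAt.fun_finsetProd (u := Finset.univ) fun i _ => hentry (σ i) i).const_mul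
      ((Equiv.Perm.sign σ : ℤ) : 𝕜)
  simp only [← det_apply'] at hleibniz
  refine hleibniz.congr_deriv ?_
  have hprod (σ : Equiv.Perm n) (i : n) :
      ∏ j, (S t).updateCol i (S'.col i) (σ j) j =
        (∏ j ∈ Finset.univ.erase i, S t (σ j) j) * S' (σ i) i := by
    rw [← Finset.prod_erase_mul _ _ (Finset.mem_univ i), updateCol_self, col_apply]
    congr 1
    exact Finset.prod_congr rfl fun j hj => updateCol_ne (Finset.ne_of_mem_erase hj)
  simp only [trace_adjugate_mul, det_apply', hprod, smul_eq_mul, Finset.mul_sum]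
  exact Finset.sum_comm

lemma hasDerivAt_matrix_inv [CompleteSpace 𝕜] (hS : HasDerivAt S S' t) (hdet : IsUnit (S t).det) :
    HasDerivAt (fun s => (S s)⁻¹) (-((S t)⁻¹ * S' * (S t)⁻¹)) t := by
  -- The ℓ^∞ operator norm induces the entrywise topology in which the derivative is taken.
  let := Matrix.linftyOpNormedRing (n := n) (α := 𝕜)
  let := Matrix.linftyOpNormedAlgebra (n := n) (R := 𝕜) (α := 𝕜)
  have : HasSummableGeomSeries (Matrix n n 𝕜) :=
    @instHasSummableGeomSeriesOfCompleteSpace _ _ (inferInstanceAs (CompleteSpace (n → n → 𝕜)))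
  obtain ⟨u, hu⟩ := (isUnit_iff_isUnit_det _).2 hdet
  have hinv := hasFDerivAt_ringInverse (𝕜 := 𝕜) u
  rw [hu] at hinv
  have := hinv.comp_hasDerivAt t hS
  simp only [nonsing_inv_eq_ringInverse]
  refine this.congr_deriv ?_
  simp [← hu, mul_assoc]

end Calculus

/-- The centred Gaussian density with covariance matrix `S`, as a function of the deviation `z` from
the mean. -/
noncomputable def gaussianKernel {n : Type*} [Fintype n] [DecidableEq n] (S : Matrix n n ℝ)
    (z : n → ℝ) : ℝ :=
  (√(2 * π) ^ Fintype.card n * √S.det)⁻¹ * exp (-(1 / 2) * (z ⬝ᵥ (S⁻¹ *ᵥ z)))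

section GaussianKernel

variable {n : Type*} [Fintype n] [DecidableEq n] {z : ℝ → n → ℝ} {t : ℝ}

lemma hasDerivAt_inv_sqrt_det {S : ℝ → Matrix n n ℝ} {S' : Matrix n n ℝ}
    (hS : HasDerivAt S S' t) (hdet : 0 < (S t).det) :
    HasDerivAt (fun s => (√(S s).det)⁻¹) (-((S t)⁻¹ * S').trace / 2 * (√(S t).det)⁻¹) t := by
  have hsqrt : √(S t).det ≠ 0 := (sqrt_pos.2 hdet).ne'
  refine (((hasDerivAt_det hS).sqrt hdet.ne').fun_inv hsqrt).congr_deriv ?_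
  have hadj : (S t).adjugate = √(S t).det ^ 2 • (S t)⁻¹ := by
    rw [sq_sqrt hdet.le, inv_def, smul_smul, Ring.mul_inverse_cancel _ hdet.ne'.isUnit, one_smul]
  rw [hadj, smul_mul, trace_smul, smul_eq_mul]
  field_simp

lemma hasDerivAt_gaussianKernel {S : ℝ → Matrix n n ℝ} {S' : Matrix n n ℝ} {z' : n → ℝ}
    (hS : HasDerivAt S S' t) (hsymm : (S t).IsSymm) (hdet : 0 < (S t).det)
    (hz : HasDerivAt z z' t) :
    HasDerivAt (fun s => gaussianKernel (S s) (z s))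
      ((((S t)⁻¹ *ᵥ z t) ⬝ᵥ (S' *ᵥ ((S t)⁻¹ *ᵥ z t)) / 2 - ((S t)⁻¹ * S').trace / 2
        - ((S t)⁻¹ *ᵥ z t) ⬝ᵥ z') * gaussianKernel (S t) (z t)) t := by
  have hquad := hasDerivAt_dotProduct_mulVec_self
    (hasDerivAt_matrix_inv hS hdet.ne'.isUnit) hsymm.inv hz
  have hinv : z t ⬝ᵥ (-((S t)⁻¹ * S' * (S t)⁻¹) *ᵥ z t) =
      -(((S t)⁻¹ *ᵥ z t) ⬝ᵥ (S' *ᵥ ((S t)⁻¹ *ᵥ z t))) := by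
    rw [neg_mulVec, dotProduct_neg, ← mulVec_mulVec, ← mulVec_mulVec, dotProduct_mulVec,
      ← mulVec_transpose, hsymm.inv.eq]
  simp only [gaussianKernel, mul_inv]
  refine (((hasDerivAt_inv_sqrt_det hS hdet).const_mul _).fun_mul
    (hquad.const_mul (-(1 / 2))).exp).congr_deriv ?_
  rw [hinv]
  ring

variable {S : Matrix n n ℝ} {e : n → ℝ}

lemma hasDerivAt_gaussianKernel_right (hsymm : S.IsSymm) (hz : HasDerivAt z e t) :
    HasDerivAt (fun s => gaussianKernel S (z s))
      (-((S⁻¹ *ᵥ z t) ⬝ᵥ e) * gaussianKernel S (z t)) t := by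
  have hquad := hasDerivAt_dotProduct_mulVec_self (hasDerivAt_const_matrix t S⁻¹) hsymm.inv hz
  refine ((hquad.const_mul (-(1 / 2))).exp.const_mul _).congr_deriv ?_
  rw [gaussianKernel, zero_mulVec, dotProduct_zero]
  ring

lemma hasDerivAt_deriv_gaussianKernel_right (hsymm : S.IsSymm)
    (hz : ∀ s, HasDerivAt z e s) :
    HasDerivAt (deriv fun s => gaussianKernel S (z s))
      ((((S⁻¹ *ᵥ z t) ⬝ᵥ e) ^ 2 - (S⁻¹ *ᵥ e) ⬝ᵥ e) * gaussianKernel S (z t)) t := by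
  rw [funext fun s => (hasDerivAt_gaussianKernel_right hsymm (hz s)).deriv]
  have hscore := hasDerivAt_dotProduct (hasDerivAt_mulVec (hasDerivAt_const_matrix t S⁻¹) (hz t))
    (hasDerivAt_const t e)
  refine (hscore.fun_neg.fun_mul (hasDerivAt_gaussianKernel_right hsymm (hz t))).congr_deriv ?_
  simp only [zero_mulVec, zero_add, dotProduct_zero, add_zero]
  ring

lemma hasDerivAt_gaussianKernel_of_lyapunov {S : ℝ → Matrix n n ℝ} {m : ℝ → n → ℝ}
    {A D : Matrix n n ℝ} (hS : HasDerivAt S (A * S t + S t * Aᵀ + 2 • D) t)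
    (hm : HasDerivAt m (A *ᵥ m t) t) (hsymm : (S t).IsSymm) (hdet : 0 < (S t).det)
    (x : n → ℝ) :
    HasDerivAt (fun s => gaussianKernel (S s) (x - m s))
      ((((S t)⁻¹ *ᵥ (x - m t)) ⬝ᵥ (A *ᵥ x) - A.trace
        + (((S t)⁻¹ *ᵥ (x - m t)) ⬝ᵥ (D *ᵥ ((S t)⁻¹ *ᵥ (x - m t))) - ((S t)⁻¹ * D).trace))
        * gaussianKernel (S t) (x - m t)) t := by
  refine (hasDerivAt_gaussianKernel hS hsymm hdet (hm.const_sub x)).congr_deriv ?_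
  set w := (S t)⁻¹ *ᵥ (x - m t) with hw
  have hunit : IsUnit (S t).det := hdet.ne'.isUnit
  have hSw : S t *ᵥ w = x - m t := by rw [hw, mulVec_mulVec, mul_nonsing_inv _ hunit, one_mulVec]
  have hdrift : w ⬝ᵥ ((A * S t) *ᵥ w) = w ⬝ᵥ (A *ᵥ x) - w ⬝ᵥ (A *ᵥ m t) := by
    rw [← mulVec_mulVec, hSw, mulVec_sub, dotProduct_sub]
  have hdrift_transpose : w ⬝ᵥ ((S t * Aᵀ) *ᵥ w) = w ⬝ᵥ ((A * S t) *ᵥ w) := by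
    rw [dotProduct_mulVec, ← mulVec_transpose, transpose_mul, transpose_transpose, hsymm.eq,
      dotProduct_comm]
  have htrace : ((S t)⁻¹ * (A * S t)).trace = A.trace := by
    rw [trace_mul_comm, mul_assoc, mul_nonsing_inv _ hunit, mul_one]
  have htrace_transpose : ((S t)⁻¹ * (S t * Aᵀ)).trace = A.trace := by
    rw [← mul_assoc, nonsing_inv_mul _ hunit, one_mul, trace_transpose]
  simp only [add_mulVec, dotProduct_add, mul_add, trace_add, two_smul, hdrift_transpose, hdrift,
    htrace, htrace_transpose, dotProduct_neg]
  ring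

end GaussianKernel

lemma sinh_lt_mul_cosh {y : ℝ} (hy : 0 < y) : sinh y < y * cosh y := by
  have hderiv (x : ℝ) : HasDerivAt (fun x => x * cosh x - sinh x) (x * sinh x) x :=
    (((hasDerivAt_id' x).fun_mul (hasDerivAt_cosh x)).fun_sub (hasDerivAt_sinh x)).congr_deriv
      (by ring)
  have hmono : StrictMonoOn (fun x => x * cosh x - sinh x) (Set.Ici 0) := by
    refine strictMonoOn_of_deriv_pos (convex_Ici 0)
      (fun x _ => (hderiv x).continuousAt.continuousWithinAt) fun x hx => ?_
    rw [interior_Ici, Set.mem_Ioi] at hx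
    rw [(hderiv x).deriv]
    exact mul_pos hx (sinh_pos_iff.2 hx)
  simpa using hmono Set.self_mem_Ici hy.le hy

lemma sinh_mul_mul_cosh_sub_sinh_pos {y : ℝ} (hy : y ≠ 0) :
    0 < sinh y * (y * cosh y - sinh y) := by
  wlog hpos : 0 < y generalizing y
  · have := this (neg_ne_zero.2 hy) (neg_pos.2 (hy.lt_of_le (not_lt.1 hpos)))
    rw [sinh_neg, cosh_neg] at this
    linarith
  · exact mul_pos (sinh_pos_iff.2 hpos) (sub_pos.2 (sinh_lt_mul_cosh hpos))

section Langevin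

variable {γ t : ℝ}

/-- The drift matrix of the linear system `q' = p`, `p' = -γ p` driving the kinetic
Fokker–Planck equation, in the coordinates `(q, p)`. -/
def langevinDrift (γ : ℝ) : Matrix (Fin 2) (Fin 2) ℝ := !![0, 1; 0, -γ]

/-- The diffusion matrix of the kinetic Fokker–Planck equation: noise acts on the momentum
only. -/
def langevinDiffusion (γ : ℝ) : Matrix (Fin 2) (Fin 2) ℝ := !![0, 0; 0, γ]

lemma langevinDrift_mulVec (γ : ℝ) (z : Fin 2 → ℝ) : langevinDrift γ *ᵥ z = ![z 1, -γ * z 1] := by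
  rw [mulVec_fin_two]
  simp [langevinDrift]

lemma langevinDiffusion_mulVec (γ : ℝ) (z : Fin 2 → ℝ) :
    langevinDiffusion γ *ᵥ z = ![0, γ * z 1] := by
  rw [mulVec_fin_two]
  simp [langevinDiffusion]

lemma trace_langevinDrift (γ : ℝ) : (langevinDrift γ).trace = -γ := by
  simp [langevinDrift]

lemma trace_mul_langevinDiffusion (K : Matrix (Fin 2) (Fin 2) ℝ) (γ : ℝ) :
    (K * langevinDiffusion γ).trace = γ * ((K *ᵥ ![0, 1]) ⬝ᵥ ![0, 1]) := by
  simp [langevinDiffusion, trace_fin_two, mul_apply, mul_comm]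

lemma exp_neg_two_mul (γ s : ℝ) : exp (-2 * γ * s) = exp (-γ * s) ^ 2 := by
  rw [← exp_nat_mul]
  congr 1
  push_cast
  ring

lemma hasDerivAt_exp_neg_mul (γ t : ℝ) :
    HasDerivAt (fun s => exp (-γ * s)) (-γ * exp (-γ * t)) t :=
  (hasDerivAt_const_mul (-γ)).exp.congr_deriv (mul_comm _ _)

lemma covMat_isSymm (γ t : ℝ) : (covMat γ t).IsSymm := by
  ext i j
  fin_cases i <;> fin_cases j <;> rfl

lemma det_covMat (hγ : γ ≠ 0) (t : ℝ) :
    (covMat γ t).det = 16 * exp (-γ * t) / γ ^ 2 *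
      (sinh (γ * t / 2) * (γ * t / 2 * cosh (γ * t / 2) - sinh (γ * t / 2))) := by
  have hexp : exp (-γ * t) = (exp (γ * t / 2))⁻¹ ^ 2 := by
    rw [← exp_neg, ← exp_nat_mul]
    congr 1
    push_cast
    ring
  rw [covMat, det_fin_two_of, exp_neg_two_mul, sinh_eq, cosh_eq, exp_neg, hexp]
  field_simp
  ring

lemma det_covMat_pos (hγ : γ ≠ 0) (ht : t ≠ 0) : 0 < (covMat γ t).det := by
  have := sinh_mul_mul_cosh_sub_sinh_pos (div_ne_zero (mul_ne_zero hγ ht) two_ne_zero)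
  rw [det_covMat hγ]
  positivity

lemma hasDerivAt_meanVec (hγ : γ ≠ 0) (q₀ p₀ : ℝ) :
    HasDerivAt (fun s => meanVec γ s q₀ p₀) (langevinDrift γ *ᵥ meanVec γ t q₀ p₀) t := by
  have hexp := hasDerivAt_exp_neg_mul γ t
  have hposition := (((hexp.const_sub 1).const_mul p₀).div_const γ).const_add q₀
  have hmomentum := hexp.const_mul p₀
  rw [langevinDrift_mulVec]
  refine hasDerivAt_pi.2 <| Fin.forall_fin_two.2
    ⟨hposition.congr_deriv ?_, hmomentum.congr_deriv ?_⟩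
  all_goals
    simp only [meanVec, cons_val_zero, cons_val_one, cons_val_fin_one]
    field_simp

lemma langevin_lyapunov (γ a b c : ℝ) :
    langevinDrift γ * !![a, b; b, c] + !![a, b; b, c] * (langevinDrift γ)ᵀ
        + 2 • langevinDiffusion γ =
      !![2 * b, c - γ * b; c - γ * b, 2 * γ * (1 - c)] := by
  have htranspose : (langevinDrift γ)ᵀ = !![0, 0; 1, -γ] := eta_fin_two _
  rw [htranspose, langevinDrift, langevinDiffusion, mul_fin_two, mul_fin_two]
  ext i j
  fin_cases i <;> fin_cases j <;> simp <;> ring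

lemma hasDerivAt_covMat (hγ : γ ≠ 0) :
    HasDerivAt (covMat γ) (langevinDrift γ * covMat γ t + covMat γ t * (langevinDrift γ)ᵀ
      + 2 • langevinDiffusion γ) t := by
  have hexp := hasDerivAt_exp_neg_mul γ t
  have hexp_two : HasDerivAt (fun s => exp (-2 * γ * s)) (-2 * γ * exp (-2 * γ * t)) t := by
    simpa only [neg_mul] using hasDerivAt_exp_neg_mul (2 * γ) t
  have hqq := ((((hasDerivAt_const_mul γ).sub_const (3 / 2)).add (hexp.const_mul 2)).sub
    (hexp_two.div_const 2)).const_mul (2 / γ ^ 2)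
  have hqp := ((hexp.const_sub 1).fun_pow 2).div_const γ
  have hpp := hexp_two.const_sub 1
  rw [covMat, langevin_lyapunov, exp_neg_two_mul]
  rw [exp_neg_two_mul] at hqq hpp
  refine hasDerivAt_matrix_iff.2 <| Fin.forall_fin_two.2
    ⟨Fin.forall_fin_two.2 ⟨hqq.congr_deriv ?_, hqp.congr_deriv ?_⟩,
      Fin.forall_fin_two.2 ⟨hqp.congr_deriv ?_, hpp.congr_deriv ?_⟩⟩
  all_goals
    simp only [of_apply, cons_val_zero, cons_val_one, cons_val_fin_one]
    field_simp
    ring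

lemma Fsol_eq_gaussianKernel (γ t q p q₀ p₀ : ℝ) :
    Fsol γ t q p q₀ p₀ = gaussianKernel (covMat γ t) (![q, p] - meanVec γ t q₀ p₀) := by
  rw [Fsol, gaussianKernel, Fintype.card_fin, sq_sqrt (by positivity)]

lemma hasDerivAt_vec_position (p q : ℝ) : HasDerivAt (fun y => ![y, p]) ![1, 0] q :=
  hasDerivAt_pi.2 <| Fin.forall_fin_two.2 ⟨hasDerivAt_id q, hasDerivAt_const q p⟩

lemma hasDerivAt_vec_momentum (q p : ℝ) : HasDerivAt (fun r => ![q, r]) ![0, 1] p :=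
  hasDerivAt_pi.2 <| Fin.forall_fin_two.2 ⟨hasDerivAt_const p q, hasDerivAt_id p⟩

end Langevin

theorem stmt6_general {γ : ℝ} (hγ : γ ≠ 0) (q₀ p₀ : ℝ) :
    (∀ t : ℝ, t ≠ 0 → IsUnit (covMat γ t).det)
    ∧ (∀ t : ℝ, t ≠ 0 → ∀ q p : ℝ,
        deriv (fun s => Fsol γ s q p q₀ p₀) t
          = -p * deriv (fun y => Fsol γ t y p q₀ p₀) q
            + γ * deriv (fun r => r * Fsol γ t q r q₀ p₀) p
            + γ * deriv (deriv (fun r => Fsol γ t q r q₀ p₀)) p) := by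
  refine ⟨fun t ht => (det_covMat_pos hγ ht).ne'.isUnit, fun t ht q p => ?_⟩
  have hsymm := covMat_isSymm γ t
  have htime := hasDerivAt_gaussianKernel_of_lyapunov (hasDerivAt_covMat hγ)
    (hasDerivAt_meanVec hγ q₀ p₀) hsymm (det_covMat_pos hγ ht) ![q, p]
  have hposition := hasDerivAt_gaussianKernel_right hsymm
    ((hasDerivAt_vec_position p q).sub_const (meanVec γ t q₀ p₀))
  have hmomentum (r : ℝ) := (hasDerivAt_vec_momentum q r).sub_const (meanVec γ t q₀ p₀)
  have hflux := (hasDerivAt_id' p).fun_mul (hasDerivAt_gaussianKernel_right hsymm (hmomentum p))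
  have hsecond := hasDerivAt_deriv_gaussianKernel_right (t := p) hsymm hmomentum
  simp only [Fsol_eq_gaussianKernel]
  rw [htime.deriv, hposition.deriv, hflux.deriv, hsecond.deriv]
  simp only [langevinDrift_mulVec, langevinDiffusion_mulVec, trace_langevinDrift,
    trace_mul_langevinDiffusion, vec2_dotProduct, cons_val_zero, cons_val_one, cons_val_fin_one]
  ring

/-- For every `t > 0` the covariance matrix `Σ(t)` is invertible, and the Gaussian
fundamental solution `F(t,q,p;q₀,p₀)` satisfies the kinetic Fokker–Planck equation
`∂F/∂t = −p ∂F/∂q + γ ∂/∂p (p F) + γ ∂²F/∂p²` for all `t > 0` and `q, p ∈ ℝ`. -/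
theorem stmt6 (γ : ℝ) (hγ : 0 < γ) (q₀ p₀ : ℝ) :
    (∀ t : ℝ, 0 < t → IsUnit (covMat γ t).det)
    ∧ (∀ t : ℝ, 0 < t → ∀ q p : ℝ,
        deriv (fun s => Fsol γ s q p q₀ p₀) t
          = -p * deriv (fun y => Fsol γ t y p q₀ p₀) q
            + γ * deriv (fun r => r * Fsol γ t q r q₀ p₀) p
            + γ * deriv (deriv (fun r => Fsol γ t q r q₀ p₀)) p) :=
  (stmt6_general hγ.ne' q₀ p₀).imp (fun hdet t ht => hdet t ht.ne')
    fun hpde t ht => hpde t ht.ne'
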